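/- For every η with |η| < |a|, setting f_i(η) = f_{e_i}(e^{i t(η)}) and g_i(η) = g_{e_i}(e^{−i t(η)}) for i = 1, 2 (where e₁, e₂ is the standard basis of ℂ²), one has |f₁(η)|² + |f₂(η)|² + |g₁(η)|² + |g₂(η)|² = 1 + η λ_A(φ), where λ_A(φ) = |φ₂|² − |φ₁|² + (1/|a|²)(a b conj(φ₁) φ₂ + conj(a) conj(b) φ₁ conj(φ₂)). -/

import Mathlib

/-!
For a unit vector `w ∈ ℂ²`, the pair `w, Jw` is an orthonormal basis. Summing over `e₁, e₂`
therefore turns the left side into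
`|⟨φ, u(z)⟩|² + |⟨φ, Ju(conj z)⟩|² = ‖φ‖² + |⟨φ, u(z)⟩|² - |⟨φ, u(conj z)⟩|²` with `z = e^{it(η)}`.

Write `λ(e^{it}) = e^{iμ(t)}`, so `cos μ = |a| cos t`, and let `v = μ'(t) = |a| sin t / sin μ`.
Then `λ - |a| conj z = i (1 + v) sin μ` and `|b|² = (1 - v²) sin² μ`, which give
`|u₁|² = (1 - v)/2`, `|u₂|² = (1 + v)/2` and `conj u₁ · u₂ = i conj(ab) conj z / (2 |a| sin μ)`.
Replacing `z` by `conj z` fixes `λ` and changes the sign of `v`, so twice the part of `|⟨φ, u(z)⟩|²`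
that is odd in `t` survives in the difference, and this is `v λ_A(φ)`. Finally, `t(η)` is the angle
at which `v = η`.
-/

open Filter Topology Asymptotics MeasureTheory

noncomputable section

/-- One step of the (column-decomposition) quantum walk `U` on functions `ℤ → ℂ²`:
`(Uf)(x) = P f(x+1) + Q f(x-1)` with `P = [[a,0],[-conj b,0]]`, `Q = [[0,b],[0,conj a]]`. -/
def qwStep (a b : ℂ) (f : ℤ → ℂ × ℂ) : ℤ → ℂ × ℂ := fun x =>
  (a * (f (x + 1)).1 + b * (f (x - 1)).2,
   -(starRingEnd ℂ) b * (f (x + 1)).1 + (starRingEnd ℂ) a * (f (x - 1)).2)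

/-- `δ₀ ⊗ φ : ℤ → ℂ²`. -/
def qwDelta (φ : ℂ × ℂ) : ℤ → ℂ × ℂ := fun x => if x = 0 then φ else 0

/-- Squared norm of a vector in `ℂ²`. -/
def nsq (u : ℂ × ℂ) : ℝ := ‖u.1‖ ^ 2 + ‖u.2‖ ^ 2

/-- Transition probability `p_n(φ; y) = ‖(Uⁿ(δ₀ ⊗ φ))(y)‖²`. -/
def qwP (a b : ℂ) (φ : ℂ × ℂ) (n : ℕ) (y : ℤ) : ℝ :=
  nsq (((qwStep a b)^[n] (qwDelta φ)) y)

/-- `λ_A(φ) = |φ₂|² − |φ₁|² + (1/|a|²)(ab conj(φ₁)φ₂ + conj(ab) φ₁ conj(φ₂))` (a real number). -/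
def lamA (a b : ℂ) (φ : ℂ × ℂ) : ℝ :=
  ‖φ.2‖ ^ 2 - ‖φ.1‖ ^ 2 +
    (a * b * (starRingEnd ℂ) φ.1 * φ.2 +
      (starRingEnd ℂ) a * (starRingEnd ℂ) b * φ.1 * (starRingEnd ℂ) φ.2).re / ‖a‖ ^ 2

/-- `μ(t) = arccos(|a| cos t)`. -/
def muF (a : ℂ) (t : ℝ) : ℝ := Real.arccos (‖a‖ * Real.cos t)

/-- `t(η) = arcsin(|b|η/(|a|√(1 − η²)))`. -/
def tF (a b : ℂ) (η : ℝ) : ℝ := Real.arcsin (‖b‖ * η / (‖a‖ * Real.sqrt (1 - η ^ 2)))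

/-- `θ(η) = 2μ(t(η)) − 2η t(η)`. -/
def thetaF (a b : ℂ) (η : ℝ) : ℝ := 2 * muF a (tF a b η) - 2 * η * tF a b η

/-- The standard inner product on `ℂ²`, conjugate-linear in the second argument
(the convention of the paper): `⟨u, v⟩ = u₁ conj(v₁) + u₂ conj(v₂)`. -/
def innC (u v : ℂ × ℂ) : ℂ :=
  u.1 * (starRingEnd ℂ) v.1 + u.2 * (starRingEnd ℂ) v.2

/-- `φ̃(z) = (z + z⁻¹)/2`; on the unit circle this is real (`= Re z`). -/
def phit (z : ℂ) : ℝ := ((z + z⁻¹) / 2).re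

/-- The eigenvalue `λ(z) = |a|φ̃(z) + i√(1 − |a|²φ̃(z)²)` of `A(ωz)`, for `z ∈ S¹`. -/
def lamS (a : ℂ) (z : ℂ) : ℂ :=
  ((‖a‖ * phit z : ℝ) : ℂ) +
    Complex.I * ((Real.sqrt (1 - ‖a‖ ^ 2 * phit z ^ 2) : ℝ) : ℂ)

/-- The normalizing factor `p(z) = √(|b|² + |λ(z) − |a| conj z|²)`. -/
def pnormF (a b : ℂ) (z : ℂ) : ℝ :=
  Real.sqrt (‖b‖ ^ 2 + ‖lamS a z - (‖a‖ : ℂ) * (starRingEnd ℂ) z‖ ^ 2)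

/-- The unit eigenvector `u(z) = (1/p(z)) ((ab/|a|)z, λ(z) − |a| conj z)ᵀ` of `A(ωz)`. -/
def uvec (a b : ℂ) (z : ℂ) : ℂ × ℂ :=
  (((pnormF a b z : ℝ) : ℂ)⁻¹ * (a * b / (‖a‖ : ℂ) * z),
   ((pnormF a b z : ℝ) : ℂ)⁻¹ * (lamS a z - (‖a‖ : ℂ) * (starRingEnd ℂ) z))

/-- `Jψ = (−conj ψ₂, conj ψ₁)ᵀ`. -/
def Jmap (ψ : ℂ × ℂ) : ℂ × ℂ := (-(starRingEnd ℂ) ψ.2, (starRingEnd ℂ) ψ.1)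

/-- `f_ψ(z) = ⟨φ, u(z)⟩⟨u(z), ψ⟩`. -/
def fpsi (a b : ℂ) (φ ψ : ℂ × ℂ) (z : ℂ) : ℂ :=
  innC φ (uvec a b z) * innC (uvec a b z) ψ

/-- `g_ψ(z) = ⟨φ, Ju(z)⟩⟨Ju(z), ψ⟩`. -/
def gpsi (a b : ℂ) (φ ψ : ℂ × ℂ) (z : ℂ) : ℂ :=
  innC φ (Jmap (uvec a b z)) * innC (Jmap (uvec a b z)) ψ

section

open scoped ComplexConjugate

variable {a b z : ℂ}

lemma norm_innC_fst_sq_add_norm_innC_snd_sq (w : ℂ × ℂ) :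
    ‖innC w (1, 0)‖ ^ 2 + ‖innC w (0, 1)‖ ^ 2 = nsq w := by
  simp [innC, nsq]

lemma nsq_Jmap (w : ℂ × ℂ) : nsq (Jmap w) = nsq w := by
  simp [nsq, Jmap, add_comm]

lemma norm_innC_sq (φ w : ℂ × ℂ) :
    ‖innC φ w‖ ^ 2 = ‖φ.1‖ ^ 2 * ‖w.1‖ ^ 2 + ‖φ.2‖ ^ 2 * ‖w.2‖ ^ 2
      + 2 * (φ.1 * conj φ.2 * (conj w.1 * w.2)).re := by
  simp only [innC, Complex.sq_norm, Complex.normSq_apply, Complex.add_re, Complex.add_im,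
    Complex.mul_re, Complex.mul_im, Complex.conj_re, Complex.conj_im]
  ring

lemma norm_innC_sq_add_norm_innC_Jmap_sq (φ w : ℂ × ℂ) :
    ‖innC φ w‖ ^ 2 + ‖innC φ (Jmap w)‖ ^ 2 = nsq φ * nsq w := by
  simp only [norm_innC_sq, Jmap, nsq, norm_neg, RCLike.norm_conj, map_neg, Complex.conj_conj,
    neg_mul, mul_neg, Complex.neg_re, mul_comm w.2]
  ring

lemma norm_fpsi_sq_add_norm_fpsi_sq (a b : ℂ) (φ : ℂ × ℂ) (z : ℂ) :
    ‖fpsi a b φ (1, 0) z‖ ^ 2 + ‖fpsi a b φ (0, 1) z‖ ^ 2 =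
      ‖innC φ (uvec a b z)‖ ^ 2 * nsq (uvec a b z) := by
  simp only [fpsi, norm_mul, mul_pow, ← mul_add, norm_innC_fst_sq_add_norm_innC_snd_sq]

lemma norm_gpsi_sq_add_norm_gpsi_sq (a b : ℂ) (φ : ℂ × ℂ) (z : ℂ) :
    ‖gpsi a b φ (1, 0) z‖ ^ 2 + ‖gpsi a b φ (0, 1) z‖ ^ 2 =
      ‖innC φ (Jmap (uvec a b z))‖ ^ 2 * nsq (uvec a b z) := by
  simp only [gpsi, norm_mul, mul_pow, ← mul_add, norm_innC_fst_sq_add_norm_innC_snd_sq, nsq_Jmap]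

lemma lamA_eq (a b : ℂ) (φ : ℂ × ℂ) :
    lamA a b φ = ‖φ.2‖ ^ 2 - ‖φ.1‖ ^ 2 +
      2 * (conj (a * b) * (φ.1 * conj φ.2)).re / ‖a‖ ^ 2 := by
  have hconj : a * b * conj φ.1 * φ.2 = conj (conj a * conj b * φ.1 * conj φ.2) := by
    simp only [map_mul, Complex.conj_conj]
  rw [lamA, hconj, Complex.add_re, Complex.conj_re, ← two_mul, map_mul, mul_assoc (conj a * conj b)]

lemma phit_of_norm_eq_one (hz : ‖z‖ = 1) : phit z = z.re := by
  simp [phit, Complex.inv_eq_conj hz]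

lemma phit_conj (z : ℂ) : phit (conj z) = phit z := by
  simp only [phit, ← map_inv₀, Complex.add_re, Complex.div_ofNat_re, Complex.conj_re]

lemma lamS_re (a z : ℂ) : (lamS a z).re = ‖a‖ * phit z := by
  simp [lamS]

lemma lamS_im (a z : ℂ) : (lamS a z).im = √(1 - ‖a‖ ^ 2 * phit z ^ 2) := by
  simp [lamS]

lemma lamS_conj (a z : ℂ) : lamS a (conj z) = lamS a z := by
  rw [lamS, lamS, phit_conj]

lemma lamS_im_sq (hab1 : ‖a‖ ^ 2 + ‖b‖ ^ 2 = 1) (hz : ‖z‖ = 1) :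
    (lamS a z).im ^ 2 = ‖b‖ ^ 2 + (‖a‖ * z.im) ^ 2 := by
  have hz2 : z.re ^ 2 + z.im ^ 2 = 1 := by
    rw [sq, sq, ← Complex.normSq_apply, Complex.normSq_eq_norm_sq, hz, one_pow]
  have hrad : 1 - ‖a‖ ^ 2 * z.re ^ 2 = ‖b‖ ^ 2 + (‖a‖ * z.im) ^ 2 := by
    linear_combination -‖a‖ ^ 2 * hz2 - hab1
  rw [lamS_im, phit_of_norm_eq_one hz, hrad, Real.sq_sqrt (by positivity)]

lemma lamS_im_pos (hab1 : ‖a‖ ^ 2 + ‖b‖ ^ 2 = 1) (hb : b ≠ 0) (hz : ‖z‖ = 1) :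
    0 < (lamS a z).im := by
  have hsq : 0 < (lamS a z).im ^ 2 := by
    rw [lamS_im_sq hab1 hz]
    positivity
  have hnonneg : 0 ≤ (lamS a z).im := by
    rw [lamS_im]
    positivity
  exact hnonneg.lt_of_ne' (sq_pos_iff.mp hsq)

/-- The group velocity `μ'(t) = |a| sin t / sin μ(t)` of the quantum walk at `z = e^{it}`, where
`λ(z) = e^{iμ(t)}` and `μ(t) = arccos(|a| cos t)`. It is written through `sin t = Im z` and
`sin μ(t) = Im λ(z)`, so that no derivative is needed. -/
def groupVelocity (a z : ℂ) : ℝ := ‖a‖ * z.im / (lamS a z).im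

lemma groupVelocity_conj (a z : ℂ) : groupVelocity a (conj z) = -groupVelocity a z := by
  simp only [groupVelocity, lamS_conj, Complex.conj_im, mul_neg, neg_div]

lemma groupVelocity_mul_lamS_im (hab1 : ‖a‖ ^ 2 + ‖b‖ ^ 2 = 1) (hb : b ≠ 0) (hz : ‖z‖ = 1) :
    groupVelocity a z * (lamS a z).im = ‖a‖ * z.im :=
  div_mul_cancel₀ _ (lamS_im_pos hab1 hb hz).ne'

lemma norm_sq_eq_one_sub_groupVelocity_sq_mul (hab1 : ‖a‖ ^ 2 + ‖b‖ ^ 2 = 1) (hb : b ≠ 0)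
    (hz : ‖z‖ = 1) : ‖b‖ ^ 2 = (1 - groupVelocity a z ^ 2) * (lamS a z).im ^ 2 := by
  have hS := lamS_im_sq hab1 hz
  rw [← groupVelocity_mul_lamS_im hab1 hb hz] at hS
  linear_combination -hS

lemma one_add_groupVelocity_pos (hab1 : ‖a‖ ^ 2 + ‖b‖ ^ 2 = 1) (hb : b ≠ 0) (hz : ‖z‖ = 1) :
    0 < 1 + groupVelocity a z := by
  have hpos : 0 < (1 - groupVelocity a z ^ 2) * (lamS a z).im ^ 2 := by
    rw [← norm_sq_eq_one_sub_groupVelocity_sq_mul hab1 hb hz]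
    positivity
  have habs : |groupVelocity a z| < 1 :=
    (sq_lt_one_iff_abs_lt_one _).mp (sub_pos.mp (pos_of_mul_pos_left hpos (sq_nonneg _)))
  linarith [neg_lt_of_abs_lt habs]

lemma lamS_sub_norm_mul_conj (hab1 : ‖a‖ ^ 2 + ‖b‖ ^ 2 = 1) (hb : b ≠ 0) (hz : ‖z‖ = 1) :
    lamS a z - ‖a‖ * conj z =
      Complex.I * (((1 + groupVelocity a z) * (lamS a z).im : ℝ) : ℂ) := by
  rw [one_add_mul, groupVelocity_mul_lamS_im hab1 hb hz]
  apply Complex.ext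
  · simp [lamS_re, phit_of_norm_eq_one hz]
  · simp

lemma pnormF_sq (hab1 : ‖a‖ ^ 2 + ‖b‖ ^ 2 = 1) (hb : b ≠ 0) (hz : ‖z‖ = 1) :
    pnormF a b z ^ 2 = 2 * (1 + groupVelocity a z) * (lamS a z).im ^ 2 := by
  rw [pnormF, Real.sq_sqrt (by positivity), lamS_sub_norm_mul_conj hab1 hb hz, norm_mul,
    Complex.norm_I, Complex.norm_real, one_mul, Real.norm_eq_abs, sq_abs,
    norm_sq_eq_one_sub_groupVelocity_sq_mul hab1 hb hz]
  ring

lemma norm_uvec_fst_sq (hab1 : ‖a‖ ^ 2 + ‖b‖ ^ 2 = 1) (ha : a ≠ 0) (hb : b ≠ 0)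
    (hz : ‖z‖ = 1) : ‖(uvec a b z).1‖ ^ 2 = (1 - groupVelocity a z) / 2 := by
  have hv := one_add_groupVelocity_pos hab1 hb hz
  have hS := lamS_im_pos hab1 hb hz
  calc ‖(uvec a b z).1‖ ^ 2
      = ‖b‖ ^ 2 / pnormF a b z ^ 2 := by
        simp only [uvec, norm_mul, norm_inv, norm_div, Complex.norm_real, hz, mul_pow, div_pow,
          inv_pow, Real.norm_eq_abs, sq_abs, mul_one]
        field_simp
    _ = (1 - groupVelocity a z) / 2 := by
        rw [pnormF_sq hab1 hb hz, norm_sq_eq_one_sub_groupVelocity_sq_mul hab1 hb hz]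
        field_simp
        ring

lemma norm_uvec_snd_sq (hab1 : ‖a‖ ^ 2 + ‖b‖ ^ 2 = 1) (hb : b ≠ 0) (hz : ‖z‖ = 1) :
    ‖(uvec a b z).2‖ ^ 2 = (1 + groupVelocity a z) / 2 := by
  have hv := one_add_groupVelocity_pos hab1 hb hz
  have hS := lamS_im_pos hab1 hb hz
  calc ‖(uvec a b z).2‖ ^ 2
      = ((1 + groupVelocity a z) * (lamS a z).im) ^ 2 / pnormF a b z ^ 2 := by
        simp only [uvec, lamS_sub_norm_mul_conj hab1 hb hz, norm_mul, norm_inv, Complex.norm_real,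
          Complex.norm_I, one_mul, mul_pow, inv_pow, Real.norm_eq_abs, sq_abs]
        ring
    _ = (1 + groupVelocity a z) / 2 := by
        rw [pnormF_sq hab1 hb hz]
        field_simp

lemma nsq_uvec (hab1 : ‖a‖ ^ 2 + ‖b‖ ^ 2 = 1) (ha : a ≠ 0) (hb : b ≠ 0) (hz : ‖z‖ = 1) :
    nsq (uvec a b z) = 1 := by
  rw [nsq, norm_uvec_fst_sq hab1 ha hb hz, norm_uvec_snd_sq hab1 hb hz]
  ring

lemma conj_uvec_fst_mul_uvec_snd (hab1 : ‖a‖ ^ 2 + ‖b‖ ^ 2 = 1) (hb : b ≠ 0)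
    (hz : ‖z‖ = 1) :
    conj (uvec a b z).1 * (uvec a b z).2 =
      conj (a * b) * conj z * Complex.I * (((2 * ‖a‖ * (lamS a z).im)⁻¹ : ℝ) : ℂ) := by
  have hv := one_add_groupVelocity_pos hab1 hb hz
  have hS := lamS_im_pos hab1 hb hz
  have hscalar : (2 * ‖a‖ * (lamS a z).im)⁻¹ =
      (pnormF a b z ^ 2)⁻¹ * ‖a‖⁻¹ * ((1 + groupVelocity a z) * (lamS a z).im) := by
    rw [pnormF_sq hab1 hb hz]
    field_simp
  simp only [uvec, lamS_sub_norm_mul_conj hab1 hb hz, hscalar, map_mul, map_inv₀, map_div₀,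
    Complex.conj_ofReal, Complex.ofReal_mul, Complex.ofReal_inv, Complex.ofReal_pow]
  ring

lemma norm_innC_uvec_sq (hab1 : ‖a‖ ^ 2 + ‖b‖ ^ 2 = 1) (ha : a ≠ 0) (hb : b ≠ 0)
    (hz : ‖z‖ = 1) (φ : ℂ × ℂ) :
    ‖innC φ (uvec a b z)‖ ^ 2 =
      (nsq φ + groupVelocity a z * (‖φ.2‖ ^ 2 - ‖φ.1‖ ^ 2)) / 2 +
        (conj (a * b) * (φ.1 * conj φ.2) * conj z * Complex.I).re / (‖a‖ * (lamS a z).im) := by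
  have hcross : φ.1 * conj φ.2 * (conj (uvec a b z).1 * (uvec a b z).2) =
      conj (a * b) * (φ.1 * conj φ.2) * conj z * Complex.I *
        (((2 * ‖a‖ * (lamS a z).im)⁻¹ : ℝ) : ℂ) := by
    rw [conj_uvec_fst_mul_uvec_snd hab1 hb hz]
    ring
  rw [norm_innC_sq, norm_uvec_fst_sq hab1 ha hb hz, norm_uvec_snd_sq hab1 hb hz, hcross,
    Complex.re_mul_ofReal, nsq]
  ring

lemma norm_innC_uvec_sq_sub_norm_innC_uvec_conj_sq (hab1 : ‖a‖ ^ 2 + ‖b‖ ^ 2 = 1)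
    (ha : a ≠ 0) (hb : b ≠ 0) (hz : ‖z‖ = 1) (φ : ℂ × ℂ) :
    ‖innC φ (uvec a b z)‖ ^ 2 - ‖innC φ (uvec a b (conj z))‖ ^ 2 =
      groupVelocity a z * lamA a b φ := by
  have hcross (c : ℂ) :
      (c * conj z * Complex.I).re - (c * conj (conj z) * Complex.I).re = 2 * z.im * c.re := by
    simp only [Complex.conj_conj, Complex.mul_I_re, Complex.mul_im, Complex.conj_re,
      Complex.conj_im]
    ring
  rw [norm_innC_uvec_sq hab1 ha hb hz, norm_innC_uvec_sq hab1 ha hb (by rwa [RCLike.norm_conj]),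
    groupVelocity_conj, lamS_conj, add_sub_add_comm, ← sub_div _ _ (‖a‖ * _), hcross, lamA_eq,
    groupVelocity]
  have hS := lamS_im_pos hab1 hb hz
  field_simp
  ring

lemma norm_fpsi_sq_add_norm_gpsi_conj_sq (hab1 : ‖a‖ ^ 2 + ‖b‖ ^ 2 = 1) (ha : a ≠ 0)
    (hb : b ≠ 0) (hz : ‖z‖ = 1) (φ : ℂ × ℂ) :
    ‖fpsi a b φ (1, 0) z‖ ^ 2 + ‖fpsi a b φ (0, 1) z‖ ^ 2 +
      ‖gpsi a b φ (1, 0) (conj z)‖ ^ 2 + ‖gpsi a b φ (0, 1) (conj z)‖ ^ 2 =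
      nsq φ + groupVelocity a z * lamA a b φ := by
  have hz' : ‖conj z‖ = 1 := by rwa [RCLike.norm_conj]
  have hpyth := norm_innC_sq_add_norm_innC_Jmap_sq φ (uvec a b (conj z))
  rw [nsq_uvec hab1 ha hb hz', mul_one] at hpyth
  rw [add_assoc, norm_fpsi_sq_add_norm_fpsi_sq, norm_gpsi_sq_add_norm_gpsi_sq,
    nsq_uvec hab1 ha hb hz, nsq_uvec hab1 ha hb hz', mul_one, mul_one,
    ← norm_innC_uvec_sq_sub_norm_innC_uvec_conj_sq hab1 ha hb hz]
  linear_combination hpyth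

lemma sin_tF (hab1 : ‖a‖ ^ 2 + ‖b‖ ^ 2 = 1) {η : ℝ} (hη : |η| ≤ ‖a‖) :
    Real.sin (tF a b η) = ‖b‖ * η / (‖a‖ * √(1 - η ^ 2)) := by
  have hη2 : η ^ 2 ≤ ‖a‖ ^ 2 := sq_le_sq.mpr (by rwa [abs_norm])
  have hη1 : 0 ≤ 1 - η ^ 2 := by linarith [sq_nonneg ‖b‖]
  have hle : (‖b‖ * η / (‖a‖ * √(1 - η ^ 2))) ^ 2 ≤ 1 := by
    rw [div_pow, mul_pow, mul_pow, Real.sq_sqrt hη1]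
    refine div_le_one_of_le₀ ?_ (mul_nonneg (sq_nonneg _) hη1)
    calc ‖b‖ ^ 2 * η ^ 2 = η ^ 2 - ‖a‖ ^ 2 * η ^ 2 := by linear_combination η ^ 2 * hab1
      _ ≤ ‖a‖ ^ 2 - ‖a‖ ^ 2 * η ^ 2 := by gcongr
      _ = ‖a‖ ^ 2 * (1 - η ^ 2) := by ring
  have habs := abs_le.mp ((sq_le_one_iff_abs_le_one _).mp hle)
  exact Real.sin_arcsin habs.1 habs.2

lemma groupVelocity_exp_tF (hab1 : ‖a‖ ^ 2 + ‖b‖ ^ 2 = 1) (ha : a ≠ 0) (hb : b ≠ 0) {η : ℝ}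
    (hη : |η| ≤ ‖a‖) : groupVelocity a (Complex.exp (Complex.I * (tF a b η : ℂ))) = η := by
  have hη2 : η ^ 2 ≤ ‖a‖ ^ 2 := sq_le_sq.mpr (by rwa [abs_norm])
  have hb2 : 0 < ‖b‖ ^ 2 := by positivity
  have hη1 : 0 < 1 - η ^ 2 := by linarith
  have hquot : 0 < ‖b‖ / √(1 - η ^ 2) :=
    div_pos (norm_pos_iff.mpr hb) (Real.sqrt_pos.mpr hη1)
  have him : ‖a‖ * (Complex.exp (Complex.I * (tF a b η : ℂ))).im =
      η * (‖b‖ / √(1 - η ^ 2)) := by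
    rw [mul_comm Complex.I, Complex.exp_ofReal_mul_I_im, sin_tF hab1 hη]
    field_simp
  have hz := Complex.norm_exp_I_mul_ofReal (tF a b η)
  have hS : (lamS a (Complex.exp (Complex.I * (tF a b η : ℂ)))).im = ‖b‖ / √(1 - η ^ 2) := by
    rw [← sq_eq_sq₀ (lamS_im_pos hab1 hb hz).le hquot.le, lamS_im_sq hab1 hz, him, mul_pow,
      div_pow, Real.sq_sqrt hη1.le]
    field_simp
    ring
  rw [groupVelocity, him, hS, mul_div_cancel_right₀ _ hquot.ne']

theorem stmt9_general (a b : ℂ) (hab1 : ‖a‖ ^ 2 + ‖b‖ ^ 2 = 1) (hab : a * b ≠ 0)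
    (φ : ℂ × ℂ) (η : ℝ) (hη : |η| ≤ ‖a‖) :
    ‖fpsi a b φ (1, 0) (Complex.exp (Complex.I * ((tF a b η : ℝ) : ℂ)))‖ ^ 2 +
      ‖fpsi a b φ (0, 1) (Complex.exp (Complex.I * ((tF a b η : ℝ) : ℂ)))‖ ^ 2 +
      ‖gpsi a b φ (1, 0) (Complex.exp (-(Complex.I * ((tF a b η : ℝ) : ℂ))))‖ ^ 2 +
      ‖gpsi a b φ (0, 1) (Complex.exp (-(Complex.I * ((tF a b η : ℝ) : ℂ))))‖ ^ 2 =
      nsq φ + η * lamA a b φ := by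
  obtain ⟨ha, hb⟩ := mul_ne_zero_iff.mp hab
  have hconj : Complex.exp (-(Complex.I * (tF a b η : ℂ))) =
      conj (Complex.exp (Complex.I * (tF a b η : ℂ))) := by
    rw [← Complex.exp_conj, map_mul, Complex.conj_I, Complex.conj_ofReal, neg_mul]
  rw [hconj, norm_fpsi_sq_add_norm_gpsi_conj_sq hab1 ha hb (Complex.norm_exp_I_mul_ofReal _),
    groupVelocity_exp_tF hab1 ha hb hη]

end

/-- for `|η| < |a|`, with `f_i(η) = f_{e_i}(e^{it(η)})`,
`g_i(η) = g_{e_i}(e^{−it(η)})`, one has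
`|f₁|² + |f₂|² + |g₁|² + |g₂|² = 1 + η λ_A(φ)`. -/
theorem stmt9 (a b : ℂ) (hab1 : ‖a‖ ^ 2 + ‖b‖ ^ 2 = 1) (hab : a * b ≠ 0)
    (φ : ℂ × ℂ) (hφ : nsq φ = 1) (η : ℝ) (hη : |η| < ‖a‖) :
    ‖fpsi a b φ (1, 0) (Complex.exp (Complex.I * ((tF a b η : ℝ) : ℂ)))‖ ^ 2 +
      ‖fpsi a b φ (0, 1) (Complex.exp (Complex.I * ((tF a b η : ℝ) : ℂ)))‖ ^ 2 +
      ‖gpsi a b φ (1, 0) (Complex.exp (-(Complex.I * ((tF a b η : ℝ) : ℂ))))‖ ^ 2 +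
      ‖gpsi a b φ (0, 1) (Complex.exp (-(Complex.I * ((tF a b η : ℝ) : ℂ))))‖ ^ 2 =
      1 + η * lamA a b φ := by
  rw [stmt9_general a b hab1 hab φ η hη.le, hφ]
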